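/- There is an absolute constant C > 0 such that for every integer n ≥ 2, every positive definite Hankel matrix H ∈ ℝ^{n×n}, and every integer k with 0 ≤ k ≤ n, the best rank-k approximation H_k of H satisfies ‖H − H_k‖_F ≤ C·√(ln n)·‖H − H_k‖₂; in particular (taking k = 0), ‖H‖_F ≤ C·√(ln n)·‖H‖₂. -/

import Mathlib

open scoped BigOperators

/-- A matrix is Hankel if its entries depend only on the sum of the indices. -/
def IsHankel {n : ℕ} (A : Matrix (Fin n) (Fin n) ℝ) : Prop :=
  ∀ i j k l : Fin n, (i : ℕ) + (j : ℕ) = (k : ℕ) + (l : ℕ) → A i j = A k l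

/-- Euclidean (ℓ₂) norm of a vector. -/
noncomputable def euclNorm {n : ℕ} (x : Fin n → ℝ) : ℝ := Real.sqrt (∑ i, x i ^ 2)

/-- Spectral norm of a matrix: supremum of ‖Ax‖₂ over the Euclidean unit ball. -/
noncomputable def specNorm {n : ℕ} (A : Matrix (Fin n) (Fin n) ℝ) : ℝ :=
  ⨆ x : {x : Fin n → ℝ // euclNorm x ≤ 1}, euclNorm (A.mulVec x.1)

/-- Frobenius norm of a matrix. -/
noncomputable def froNorm {n : ℕ} (A : Matrix (Fin n) (Fin n) ℝ) : ℝ :=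
  Real.sqrt (∑ i, ∑ j, (A i j) ^ 2)

open Polynomial

lemma geo_sum_bound (s : ℕ) (f : ℕ → ℝ) (hf : Antitone f) (h0 : ∀ i, 0 ≤ f i)
    (hd : ∀ i, f (i + s) ≤ 9 / 25 * f i) (N : ℕ) :
    ∀ k, ∑ i ∈ Finset.range (N * s), f (k + i) ^ 2 ≤ 2 * s * f k ^ 2 := by
  induction N with
  | zero => intro k; simp; positivity
  | succ N ih =>
    intro k
    rw [Nat.succ_mul, Nat.add_comm, Finset.sum_range_add]
    have h1 : ∑ i ∈ Finset.range s, f (k + i) ^ 2 ≤ s * f k ^ 2 := by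
      calc _ ≤ ∑ i ∈ Finset.range s, f k ^ 2 := by
            apply Finset.sum_le_sum
            intro i _
            exact pow_le_pow_left₀ (h0 _) (hf (by omega)) 2
        _ = _ := by simp
    have h2 := ih (k + s)
    have h3 : f (k + s) ^ 2 ≤ (9 / 25 * f k) ^ 2 := pow_le_pow_left₀ (h0 _) (hd k) 2
    have h4 : (s : ℝ) * f (k + s) ^ 2 ≤ s * (9 / 25 * f k) ^ 2 := by gcongr
    have h5 : 0 ≤ (s : ℝ) * f k ^ 2 := by positivity
    simp only [← add_assoc]
    nlinarith

lemma spectral_sorted {n : ℕ} (H : Matrix (Fin n) (Fin n) ℝ) (hH : H.PosDef) :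
    ∃ (U : Matrix (Fin n) (Fin n) ℝ) (l : Fin n → ℝ), Antitone l ∧ (∀ i, 0 ≤ l i) ∧
      U.transpose * U = 1 ∧ U * U.transpose = 1 ∧ H = U * Matrix.diagonal l * U.transpose := by
  have hs : (Matrix.toEuclideanLin H).IsSymmetric :=
    Matrix.isSymmetric_toEuclideanLin_iff.2 hH.isHermitian
  have hn : Module.finrank ℝ (EuclideanSpace ℝ (Fin n)) = n := by simp
  set b := hs.eigenvectorBasis hn
  let U : Matrix (Fin n) (Fin n) ℝ := fun i j => (b j) i
  have hU : U.transpose * U = 1 := by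
    ext i j
    have := (orthonormal_iff_ite.1 b.orthonormal) i j
    rw [Matrix.mul_apply, Matrix.one_apply, ← this, PiLp.inner_apply]
    refine Finset.sum_congr rfl fun x _ => ?_
    rw [Matrix.transpose_apply]
    simp [U, mul_comm]
  have hU' : U * U.transpose = 1 := mul_eq_one_comm.1 hU
  have hHU : H * U = U * Matrix.diagonal (hs.eigenvalues hn) := by
    ext i j
    have := congrArg (fun v : EuclideanSpace ℝ (Fin n) => v i) (hs.apply_eigenvectorBasis hn j)
    simp only [Matrix.mul_diagonal]
    rw [Matrix.mul_apply]
    simp only [U]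
    rw [mul_comm]
    exact this
  have hHe : H = U * Matrix.diagonal (hs.eigenvalues hn) * U.transpose := by
    rw [← hHU, Matrix.mul_assoc, hU', Matrix.mul_one]
  refine ⟨U, hs.eigenvalues hn, hs.eigenvalues_antitone hn, ?_, hU, hU', hHe⟩
  have hps := hH.posSemidef
  have : Matrix.diagonal (hs.eigenvalues hn) = U.conjTranspose * H * U := by
    rw [Matrix.mul_assoc, hHU, ← Matrix.mul_assoc, Matrix.conjTranspose_eq_transpose_of_trivial, hU,
      Matrix.one_mul]
  have h2 := hps.conjTranspose_mul_mul_same U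
  rw [← this] at h2
  exact Matrix.posSemidef_diagonal_iff.1 h2

lemma quad_form {n : ℕ} (U H : Matrix (Fin n) (Fin n) ℝ) (l : Fin n → ℝ)
    (hHe : H = U * Matrix.diagonal l * U.transpose) (x : Fin n → ℝ) :
    x ⬝ᵥ H.mulVec x = ∑ i, l i * (U.transpose.mulVec x i) ^ 2 := by
  rw [hHe, ← Matrix.mulVec_mulVec, ← Matrix.mulVec_mulVec, Matrix.dotProduct_mulVec,
    ← Matrix.mulVec_transpose]
  simp only [dotProduct, Matrix.mulVec_diagonal]
  exact Finset.sum_congr rfl fun i _ => by ring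

lemma quad_form_one {n : ℕ} (U : Matrix (Fin n) (Fin n) ℝ)
    (hHe : U * U.transpose = 1) (x : Fin n → ℝ) :
    ∑ i, x i ^ 2 = ∑ i, (U.transpose.mulVec x i) ^ 2 := by
  have := quad_form U 1 (fun _ => 1) (by simp [hHe]) x
  simp only [Matrix.one_mulVec, one_mul] at this
  rw [← this]
  simp [dotProduct, sq]

lemma fro_conj {n : ℕ} (U : Matrix (Fin n) (Fin n) ℝ) (l : Fin n → ℝ)
    (hU : U.transpose * U = 1) :
    froNorm (U * Matrix.diagonal l * U.transpose) = Real.sqrt (∑ i, l i ^ 2) := by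
  unfold froNorm
  congr 1
  set A := U * Matrix.diagonal l * U.transpose with hA
  have h1 : ∑ i, ∑ j, A i j ^ 2 = (A * A.transpose).trace := by
    simp [Matrix.trace, Matrix.mul_apply, sq]
  have h2 : A * A.transpose = U * (Matrix.diagonal l * Matrix.diagonal l * U.transpose) := by
    have : A.transpose = A := by simp [hA, Matrix.transpose_mul, Matrix.mul_assoc]
    rw [this, hA]
    calc _ = U * Matrix.diagonal l * (U.transpose * U) * Matrix.diagonal l * U.transpose := by
          simp only [Matrix.mul_assoc]
      _ = _ := by rw [hU]; simp only [Matrix.mul_assoc, Matrix.mul_one, Matrix.one_mul]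
  rw [h1, h2, Matrix.trace_mul_comm, Matrix.mul_assoc, hU, Matrix.mul_one]
  simp [Matrix.trace, sq]

lemma le_specNorm {n : ℕ} (A : Matrix (Fin n) (Fin n) ℝ) (x : Fin n → ℝ) (hx : x ≠ 0) (c : ℝ)
    (hc : 0 ≤ c) (h : c ^ 2 * ∑ i, x i ^ 2 ≤ ∑ i, (A.mulVec x i) ^ 2) : c ≤ specNorm A := by
  have hpos : 0 < ∑ i, x i ^ 2 := by
    obtain ⟨i, hi⟩ := Function.ne_iff.1 hx
    exact Finset.sum_pos' (fun i _ => sq_nonneg _) ⟨i, Finset.mem_univ _, by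
      have : x i ≠ 0 := hi
      positivity⟩
  set r := Real.sqrt (∑ i, x i ^ 2) with hr
  have hr0 : 0 < r := Real.sqrt_pos.2 hpos
  have hr2 : r ^ 2 = ∑ i, x i ^ 2 := Real.sq_sqrt hpos.le
  have hbdd : BddAbove (Set.range fun x : {x : Fin n → ℝ // euclNorm x ≤ 1} =>
      euclNorm (A.mulVec x.1)) := by
    refine ⟨froNorm A, ?_⟩
    rintro _ ⟨⟨y, hy⟩, rfl⟩
    simp only [euclNorm, froNorm] at hy ⊢
    apply Real.sqrt_le_sqrt
    apply Finset.sum_le_sum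
    intro i _
    have hy2 : ∑ i, y i ^ 2 ≤ 1 := by
      rw [Real.sqrt_le_iff] at hy
      simpa using hy.2
    calc (A.mulVec y i) ^ 2 ≤ (∑ j, A i j ^ 2) * ∑ j, y j ^ 2 := by
          simp only [Matrix.mulVec, dotProduct]
          exact Finset.sum_mul_sq_le_sq_mul_sq _ _ _
      _ ≤ (∑ j, A i j ^ 2) * 1 := by
          apply mul_le_mul_of_nonneg_left hy2
          exact Finset.sum_nonneg fun _ _ => sq_nonneg _
      _ = _ := mul_one _
  have hy : euclNorm (r⁻¹ • x) ≤ 1 := by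
    unfold euclNorm
    rw [Real.sqrt_le_iff]
    refine ⟨zero_le_one, ?_⟩
    simp only [Pi.smul_apply, smul_eq_mul, mul_pow, ← Finset.mul_sum, ← hr2]
    rw [← mul_pow, inv_mul_cancel₀ hr0.ne']
  refine le_trans ?_ (le_ciSup hbdd ⟨r⁻¹ • x, hy⟩)
  simp only [euclNorm, Matrix.mulVec_smul]
  apply Real.le_sqrt_of_sq_le
  simp only [Pi.smul_apply, smul_eq_mul, mul_pow, ← Finset.mul_sum]
  rw [← hr2] at h
  calc c ^ 2 = (r⁻¹) ^ 2 * (c ^ 2 * r ^ 2) := by field_simp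
    _ ≤ _ := by gcongr

lemma specNorm_nonneg {n : ℕ} (A : Matrix (Fin n) (Fin n) ℝ) : 0 ≤ specNorm A :=
  Real.iSup_nonneg fun _ => Real.sqrt_nonneg _

lemma eckart {n : ℕ} (H U B : Matrix (Fin n) (Fin n) ℝ) (l : Fin n → ℝ) (hl : Antitone l)
    (hl0 : ∀ i, 0 ≤ l i) (hU : U.transpose * U = 1) (hU' : U * U.transpose = 1)
    (hHe : H = U * Matrix.diagonal l * U.transpose) (k : Fin n) (hB : B.rank ≤ k) :
    l k ≤ specNorm (H - B) := by
  let Φ : (Fin n → ℝ) →ₗ[ℝ] (LinearMap.range B.mulVecLin) × (Fin (n - 1 - k) → ℝ) :=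
    (B.mulVecLin.rangeRestrict).prod
      ((LinearMap.funLeft ℝ ℝ (fun b : Fin (n - 1 - k) => (⟨k + 1 + b, by omega⟩ : Fin n))).comp
        U.transpose.mulVecLin)
  have hker : LinearMap.ker Φ ≠ ⊥ := by
    apply LinearMap.ker_ne_bot_of_finrank_lt
    have : Module.finrank ℝ (LinearMap.range B.mulVecLin) ≤ k := hB
    have := k.2
    simp only [Module.finrank_prod, Module.finrank_fin_fun]
    omega
  obtain ⟨x, hx, hx0⟩ := Submodule.exists_mem_ne_zero_of_ne_bot hker
  have hx' : Φ x = 0 := hx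
  have h1 : B.mulVec x = 0 := congrArg Subtype.val (congrArg Prod.fst hx')
  have h2 : ∀ a : Fin n, k < a → U.transpose.mulVec x a = 0 := by
    intro a ha
    have ha' : (k : ℕ) < a := ha
    have := congrFun (congrArg Prod.snd hx') ⟨a - (k + 1), by omega⟩
    have e : (⟨k + 1 + (a - (k + 1)), by omega⟩ : Fin n) = a := by ext; simp; omega
    have h3 : U.transpose.mulVec x (⟨k + 1 + (a - (k + 1)), by omega⟩ : Fin n) = 0 := this
    rwa [e] at h3
  apply le_specNorm _ x hx0 _ (hl0 k)
  rw [Matrix.sub_mulVec, h1, sub_zero, quad_form_one U hU' (H.mulVec x), quad_form_one U hU' x]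
  have h3 : U.transpose.mulVec (H.mulVec x) = (Matrix.diagonal l).mulVec (U.transpose.mulVec x) := by
    rw [Matrix.mulVec_mulVec, Matrix.mulVec_mulVec, hHe, Matrix.mul_assoc, ← Matrix.mul_assoc, hU,
      Matrix.one_mul]
  rw [h3, Finset.mul_sum]
  apply Finset.sum_le_sum
  intro a _
  rw [Matrix.mulVec_diagonal, mul_pow]
  rcases lt_or_ge k a with ha | ha
  · rw [h2 a ha]; simp
  · gcongr
    · exact hl0 k
    · exact hl ha



/-- numerator factor -/
noncomputable def facN (a : ℝ) : ℝ[X] := (X - 1) ^ 2 - C a * (X + 1) ^ 2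
/-- denominator factor -/
noncomputable def facD (a : ℝ) : ℝ[X] := (X - 1) ^ 2 + C a * (X + 1) ^ 2

lemma facN_deg (a : ℝ) : (facN a).natDegree ≤ 2 := by unfold facN; compute_degree
lemma facD_deg (a : ℝ) : (facD a).natDegree ≤ 2 := by unfold facD; compute_degree

lemma hankel_seq {n : ℕ} (H : Matrix (Fin n) (Fin n) ℝ) (hH : IsHankel H) :
    ∃ h : ℕ → ℝ, ∀ i j : Fin n, H i j = h (i + j) := by
  classical
  refine ⟨fun s => if hs : ∃ p : Fin n × Fin n, (p.1 : ℕ) + p.2 = s then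
    H hs.choose.1 hs.choose.2 else 0, fun i j => ?_⟩
  have hs : ∃ p : Fin n × Fin n, (p.1 : ℕ) + p.2 = (i : ℕ) + j := ⟨(i, j), rfl⟩
  simp only [dif_pos hs]
  exact hH _ _ _ _ hs.choose_spec.symm

/-- the moment functional -/
noncomputable def momL (h : ℕ → ℝ) : ℝ[X] →ₗ[ℝ] ℝ :=
  Polynomial.lsum fun k => (LinearMap.mulRight ℝ (h k))

lemma momL_monomial (h : ℕ → ℝ) (k : ℕ) (c : ℝ) : momL h (monomial k c) = c * h k := by
  simp [momL]

/-- coefficient vector -/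
noncomputable def cvec (n : ℕ) : ℝ[X] →ₗ[ℝ] (Fin n → ℝ) :=
  LinearMap.pi fun i => Polynomial.lcoeff ℝ (i : ℕ)

lemma momL_sq {n : ℕ} (H : Matrix (Fin n) (Fin n) ℝ) (h : ℕ → ℝ)
    (hh : ∀ i j : Fin n, H i j = h (i + j)) (q : ℝ[X]) (hq : q.natDegree < n) :
    momL h (q ^ 2) = cvec n q ⬝ᵥ H.mulVec (cvec n q) := by
  have e : q = ∑ i : Fin n, monomial (i : ℕ) (q.coeff i) := by
    rw [Fin.sum_univ_eq_sum_range (fun i => monomial i (q.coeff i))]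
    exact q.as_sum_range' n hq
  have e2 : q ^ 2 = ∑ i : Fin n, ∑ j : Fin n, monomial ((i : ℕ) + j) (q.coeff i * q.coeff j) := by
    conv_lhs => rw [sq, e, Finset.sum_mul_sum]
    simp only [monomial_mul_monomial]
  rw [e2]
  simp only [map_sum, momL_monomial, dotProduct, Matrix.mulVec, cvec, Finset.mul_sum, hh]
  refine Finset.sum_congr rfl fun i _ => Finset.sum_congr rfl fun j _ => ?_
  simp; ring

lemma momL_step (n : ℕ) (h : ℕ → ℝ) (hp : ∀ q : ℝ[X], q.natDegree < n → 0 ≤ momL h (q ^ 2))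
    (a : ℝ) (ha : 0 ≤ a) (g : ℝ[X]) (hg : g.natDegree + 2 < n) :
    momL h ((facN a * g) ^ 2) ≤ momL h ((facD a * g) ^ 2) := by
  have e : (facD a * g) ^ 2 = (facN a * g) ^ 2 + (4 * a) • ((X ^ 2 - 1) * g) ^ 2 := by
    rw [smul_eq_C_mul]
    simp only [facN, facD, C_mul, map_ofNat]
    ring
  rw [e, map_add, map_smul]
  have : ((X ^ 2 - 1 : ℝ[X])).natDegree ≤ 2 := by compute_degree
  have h2 := hp ((X ^ 2 - 1) * g) (lt_of_le_of_lt natDegree_mul_le (by omega))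
  have : 0 ≤ (4 * a) * momL h (((X ^ 2 - 1) * g) ^ 2) := by positivity
  simpa using this

lemma prod_deg (f : ℕ → ℝ[X]) (hf : ∀ i, (f i).natDegree ≤ 2) (m : ℕ) :
    (∏ i ∈ Finset.range m, f i).natDegree ≤ 2 * m := by
  refine (natDegree_prod_le _ _).trans ?_
  calc _ ≤ ∑ i ∈ Finset.range m, 2 := Finset.sum_le_sum fun i _ => hf i
    _ = _ := by simp [mul_comm]

lemma momL_prod (n : ℕ) (h : ℕ → ℝ) (hp : ∀ q : ℝ[X], q.natDegree < n → 0 ≤ momL h (q ^ 2))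
    (a : ℕ → ℝ) (ha : ∀ i, 0 ≤ a i) (m : ℕ) : ∀ q : ℝ[X], q.natDegree + 2 * m < n →
    momL h (((∏ i ∈ Finset.range m, facN (a i)) * q) ^ 2) ≤
      momL h (((∏ i ∈ Finset.range m, facD (a i)) * q) ^ 2) := by
  induction m with
  | zero => intro q _; simp
  | succ m ih =>
    intro q hq
    rw [Finset.prod_range_succ, Finset.prod_range_succ]
    have h1 := ih (facN (a m) * q) (by
      have := natDegree_mul_le (p := facN (a m)) (q := q)
      have := facN_deg (a m)
      omega)
    have h2 := momL_step n h hp (a m) (ha m) ((∏ i ∈ Finset.range m, facD (a i)) * q) (by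
      have := natDegree_mul_le (p := ∏ i ∈ Finset.range m, facD (a i)) (q := q)
      have := prod_deg (fun i => facD (a i)) (fun i => facD_deg _) m
      omega)
    calc _ = _ := by rw [mul_assoc]
      _ ≤ _ := h1
      _ = _ := by congr 1; ring
      _ ≤ _ := h2
      _ = _ := by congr 1; ring

lemma sum_roots (M : ℕ) (w : ℂ) (hw : w ^ M = 1) (hw1 : w ≠ 1) :
    ∑ l ∈ Finset.range M, w ^ l = 0 := by
  rw [geom_sum_eq hw1, hw]; simp

lemma parseval (M : ℕ) (hM : 0 < M) : ∃ z : ℕ → ℂ, (∀ l, z l ^ M = -1) ∧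
    ∀ q : ℝ[X], q.natDegree < M →
      ∑ l ∈ Finset.range M, ‖aeval (z l) q‖ ^ 2 = M * ∑ i ∈ Finset.range M, q.coeff i ^ 2 := by
  obtain ⟨ζ, hζ⟩ : ∃ ζ : ℂ, ζ ^ M = -1 := IsAlgClosed.exists_pow_nat_eq (-1) hM
  set ω := Complex.exp (2 * Real.pi * Complex.I / M)
  have hω : IsPrimitiveRoot ω M := Complex.isPrimitiveRoot_exp M hM.ne'
  have hω1 : ‖ω‖ = 1 := hω.norm'_eq_one hM.ne'
  have hζ1 : ‖ζ‖ = 1 := by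
    have : ‖ζ‖ ^ M = 1 := by rw [← norm_pow, hζ]; simp
    exact (pow_eq_one_iff_of_nonneg (norm_nonneg _) hM.ne').1 this
  have hc : ∀ z : ℂ, ‖z‖ = 1 → z * (starRingEnd ℂ) z = 1 := by
    intro z hz; rw [Complex.mul_conj']; simp [hz]
  refine ⟨fun l => ζ * ω ^ l, fun l => ?_, fun q hq => ?_⟩
  · rw [mul_pow, hζ, ← pow_mul, mul_comm l, pow_mul, hω.pow_eq_one]; simp
  · have key : ∀ i < M, ∀ j < M, ∑ l ∈ Finset.range M,
        (ζ * ω ^ l) ^ i * (starRingEnd ℂ) ((ζ * ω ^ l) ^ j) = if i = j then (M : ℂ) else 0 := by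
      intro i hi j hj
      split_ifs with hij
      · subst hij
        rw [Finset.sum_congr rfl (g := fun _ => (1 : ℂ))]
        · simp
        · intro l _
          apply hc
          simp [hω1, hζ1]
      · have : ∀ l, (ζ * ω ^ l) ^ i * (starRingEnd ℂ) ((ζ * ω ^ l) ^ j) =
            (ζ ^ i * (starRingEnd ℂ) (ζ ^ j)) * (ω ^ i * (starRingEnd ℂ) (ω ^ j)) ^ l := by
          intro l
          simp only [map_mul, map_pow]
          ring
        simp only [this, ← Finset.mul_sum]
        rw [sum_roots M, mul_zero]
        · rw [mul_pow, ← map_pow, ← pow_mul, ← pow_mul, mul_comm i, mul_comm j, pow_mul, pow_mul,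
            hω.pow_eq_one]
          simp
        · intro h
          apply hij
          apply hω.pow_inj hi hj
          calc ω ^ i = ω ^ i * (ω ^ j * (starRingEnd ℂ) (ω ^ j)) := by
                rw [hc _ (by simp [hω1]), mul_one]
            _ = (ω ^ i * (starRingEnd ℂ) (ω ^ j)) * ω ^ j := by ring
            _ = _ := by rw [h, one_mul]
    have hexp : ∀ z : ℂ, ((‖aeval z q‖ ^ 2 : ℝ) : ℂ) = ∑ i ∈ Finset.range M, ∑ j ∈ Finset.range M,
        ((q.coeff i : ℂ) * q.coeff j) * (z ^ i * (starRingEnd ℂ) (z ^ j)) := by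
      intro z
      push_cast
      rw [← Complex.mul_conj']
      rw [aeval_eq_sum_range' hq, map_sum, Finset.sum_mul_sum]
      refine Finset.sum_congr rfl fun i _ => Finset.sum_congr rfl fun j _ => ?_
      simp only [Complex.real_smul, map_mul, Complex.conj_ofReal]
      ring
    have : ((∑ l ∈ Finset.range M, ‖aeval (ζ * ω ^ l) q‖ ^ 2 : ℝ) : ℂ) =
        ((M * ∑ i ∈ Finset.range M, q.coeff i ^ 2 : ℝ) : ℂ) := by
      rw [Complex.ofReal_sum]
      simp only [hexp]
      rw [Finset.sum_comm, Complex.ofReal_mul, Complex.ofReal_sum, Finset.mul_sum]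
      refine Finset.sum_congr rfl fun i hi => ?_
      rw [Finset.sum_comm]
      simp only [← Finset.mul_sum]
      rw [Finset.sum_congr rfl fun j hj => by
        rw [key i (Finset.mem_range.1 hi) j (Finset.mem_range.1 hj)]]
      simp only [mul_ite, mul_zero, Finset.sum_ite_eq, hi, if_true]
      push_cast; ring
    exact_mod_cast this

lemma norm_facs (a : ℝ) (z : ℂ) (hz : ‖z‖ = 1) :
    ‖aeval z (facN a)‖ = 2 * |(1 - z.re) + a * (1 + z.re)| ∧
    ‖aeval z (facD a)‖ = 2 * |(1 - z.re) - a * (1 + z.re)| := by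
  have h1 : z.re * z.re + z.im * z.im = 1 := by
    have := Complex.normSq_eq_norm_sq z
    rw [hz, Complex.normSq_apply] at this
    simpa using this
  have e1 : (z - 1) ^ 2 = ((-2 * (1 - z.re) : ℝ) : ℂ) * z := by
    apply Complex.ext <;> simp [sq] <;> nlinarith
  have e2 : (z + 1) ^ 2 = ((2 * (1 + z.re) : ℝ) : ℂ) * z := by
    apply Complex.ext <;> simp [sq] <;> nlinarith
  have eN : aeval z (facN a) = ((-2 * ((1 - z.re) + a * (1 + z.re)) : ℝ) : ℂ) * z := by
    simp only [facN, map_sub, map_pow, map_mul, map_add, aeval_X, aeval_C, map_one, e1, e2]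
    push_cast
    simp only [Complex.coe_algebraMap]
    ring
  have eD : aeval z (facD a) = ((-2 * ((1 - z.re) - a * (1 + z.re)) : ℝ) : ℂ) * z := by
    simp only [facD, map_sub, map_pow, map_mul, map_add, aeval_X, aeval_C, map_one, e1, e2]
    push_cast
    simp only [Complex.coe_algebraMap]
    ring
  rw [eN, eD, norm_mul, norm_mul, hz, Complex.norm_real, Complex.norm_real, Real.norm_eq_abs,
    Real.norm_eq_abs, abs_mul, abs_mul]
  norm_num

lemma gap (n : ℕ) (hn : 0 < n) (z : ℂ) (hz : ‖z‖ = 1) (hzn : z ^ (2 * n) = -1) :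
    1 ≤ 2 * (n : ℝ) ^ 2 * (1 - z.re) := by
  have h1 : z.re * z.re + z.im * z.im = 1 := by
    have := Complex.normSq_eq_norm_sq z
    rw [hz, Complex.normSq_apply] at this
    simpa using this
  have h2 : ‖z - 1‖ ^ 2 = 2 * (1 - z.re) := by
    rw [← Complex.normSq_eq_norm_sq, Complex.normSq_apply]
    simp; nlinarith
  have h3 : (2 : ℝ) ≤ 2 * n * ‖z - 1‖ := by
    have e : (z - 1) * ∑ i ∈ Finset.range (2 * n), z ^ i = -2 := by
      rw [mul_geom_sum, hzn]; norm_num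
    have e2 : ‖∑ i ∈ Finset.range (2 * n), z ^ i‖ ≤ 2 * n := by
      refine (norm_sum_le _ _).trans ?_
      simp [hz]
    have e3 := congrArg norm e
    rw [norm_mul, norm_neg, Complex.norm_ofNat] at e3
    nlinarith [norm_nonneg (z - 1)]
  have h4 : 1 ≤ n * ‖z - 1‖ := by linarith
  have h5 : 1 ≤ (n * ‖z - 1‖) ^ 2 := one_le_pow₀ h4
  rw [mul_pow, h2] at h5
  linarith

lemma norm_facs_prod_le (n m : ℕ) (hn : 0 < n) (hm : 4 * n ^ 2 < 2 ^ m) (z : ℂ) (hz : ‖z‖ = 1)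
    (hzn : z ^ (2 * n) = -1) :
    ‖aeval z (∏ i ∈ Finset.range m, facD (4 ^ i / (4 * n ^ 2)))‖ ≤
      3 / 5 * ‖aeval z (∏ i ∈ Finset.range m, facN (4 ^ i / (4 * n ^ 2)))‖ := by
  have g1 := gap n hn z hz hzn
  have g2 := gap n hn (-z) (by simpa using hz) (by rw [neg_pow]; simp [hzn])
  simp only [Complex.neg_re, sub_neg_eq_add] at g2
  set x := z.re
  have hn' : (0 : ℝ) < n := by exact_mod_cast hn
  have p1 : 0 < 1 - x := by
    by_contra h; push Not at h
    nlinarith [mul_nonneg (sq_nonneg (n : ℝ)) (neg_nonneg.2 h)]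
  have p2 : 0 < 1 + x := by
    by_contra h; push Not at h
    nlinarith [mul_nonneg (sq_nonneg (n : ℝ)) (neg_nonneg.2 h)]
  have t1 : 1 ≤ 4 * (n : ℝ) ^ 2 * ((1 - x) / (1 + x)) := by
    rw [← mul_div_assoc, le_div_iff₀ p2]; nlinarith
  have t2 : (1 - x) / (1 + x) ≤ 4 * (n : ℝ) ^ 2 := by
    rw [div_le_iff₀ p2]; nlinarith
  obtain ⟨k, hk1, hk2⟩ := exists_nat_pow_near t1 (show (1 : ℝ) < 4 by norm_num)
  have hkm : k < m := by
    have hm' : 4 * (n : ℝ) ^ 2 < 2 ^ m := by exact_mod_cast hm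
    have : (4 : ℝ) ^ k < 4 ^ m := by
      calc (4 : ℝ) ^ k ≤ 4 * (n : ℝ) ^ 2 * ((1 - x) / (1 + x)) := hk1
        _ ≤ (4 * (n : ℝ) ^ 2) * (4 * (n : ℝ) ^ 2) := by gcongr
        _ < 2 ^ m * 2 ^ m := by gcongr
        _ = 4 ^ m := by rw [← mul_pow]; norm_num
    exact (pow_lt_pow_iff_right₀ (by norm_num)).1 this
  rw [map_prod, map_prod, norm_prod, norm_prod]
  have hk' : k ∈ Finset.range m := Finset.mem_range.2 hkm
  rw [← Finset.mul_prod_erase _ _ hk', ← Finset.mul_prod_erase _ _ hk', ← mul_assoc]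
  have hpos : ∀ i : ℕ, (0 : ℝ) < 4 ^ i / (4 * n ^ 2) := fun i => by positivity
  apply mul_le_mul
  · rw [(norm_facs _ z hz).1, (norm_facs _ z hz).2]
    have ha := hpos k
    have hk1' : 4 ^ k / (4 * (n : ℝ) ^ 2) * (1 + x) ≤ 1 - x := by
      rw [← le_div_iff₀ p2, div_le_iff₀ (by positivity), mul_comm]; exact hk1
    have hk2' : 1 - x ≤ 4 * (4 ^ k / (4 * (n : ℝ) ^ 2)) * (1 + x) := by
      rw [← div_le_iff₀ p2, ← mul_div_assoc, le_div_iff₀ (by positivity), mul_comm, ← pow_succ']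
      exact hk2.le
    rw [abs_of_nonneg (sub_nonneg.2 hk1'), abs_of_nonneg (by positivity)]
    nlinarith
  · apply Finset.prod_le_prod
    · intros; positivity
    · intro i _
      rw [(norm_facs _ z hz).1, (norm_facs _ z hz).2]
      have ha := hpos i
      have : 0 < 4 ^ i / (4 * (n : ℝ) ^ 2) * (1 + x) := by positivity
      rw [abs_of_nonneg (show 0 ≤ (1 - x) + 4 ^ i / (4 * (n : ℝ) ^ 2) * (1 + x) by positivity)]
      have : |1 - x - 4 ^ i / (4 * (n : ℝ) ^ 2) * (1 + x)| ≤
        (1 - x) + 4 ^ i / (4 * (n : ℝ) ^ 2) * (1 + x) := by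
        rw [abs_le]; constructor <;> linarith
      linarith
  · exact Finset.prod_nonneg fun _ _ => norm_nonneg _
  · positivity

lemma coeff_sum_eq (n : ℕ) (q : ℝ[X]) (hq : q.natDegree < n) :
    ∑ i ∈ Finset.range (2 * n), q.coeff i ^ 2 = ∑ i, (cvec n q i) ^ 2 := by
  rw [show 2 * n = n + n by ring, Finset.sum_range_add]
  rw [Finset.sum_eq_zero (s := Finset.range n) (f := fun x => q.coeff (n + x) ^ 2), add_zero,
    ← Fin.sum_univ_eq_sum_range (fun i => q.coeff i ^ 2)]
  · simp [cvec]
  · intro i _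
    rw [coeff_eq_zero_of_natDegree_lt (by omega)]; simp

lemma coeff_norm_le (n m : ℕ) (hn : 0 < n) (hm : 4 * n ^ 2 < 2 ^ m) (q : ℝ[X])
    (hq : q.natDegree + 2 * m < n) :
    ∑ i, (cvec n ((∏ i ∈ Finset.range m, facD (4 ^ i / (4 * n ^ 2))) * q) i) ^ 2 ≤
     9 / 25 * ∑ i, (cvec n ((∏ i ∈ Finset.range m, facN (4 ^ i / (4 * n ^ 2))) * q) i) ^ 2 := by
  obtain ⟨z, hz, hP⟩ := parseval (2 * n) (by omega)
  have hz1 : ∀ l, ‖z l‖ = 1 := by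
    intro l
    have : ‖z l‖ ^ (2 * n) = 1 := by rw [← norm_pow, hz]; simp
    exact (pow_eq_one_iff_of_nonneg (norm_nonneg _) (by omega)).1 this
  set D := ∏ i ∈ Finset.range m, facD (4 ^ i / (4 * n ^ 2))
  set N := ∏ i ∈ Finset.range m, facN (4 ^ i / (4 * n ^ 2))
  have dD : (D * q).natDegree < n := by
    have := natDegree_mul_le (p := D) (q := q)
    have : D.natDegree ≤ 2 * m := prod_deg (fun i => facD (4 ^ i / (4 * n ^ 2))) (fun i => facD_deg _) m
    omega
  have dN : (N * q).natDegree < n := by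
    have := natDegree_mul_le (p := N) (q := q)
    have : N.natDegree ≤ 2 * m := prod_deg (fun i => facN (4 ^ i / (4 * n ^ 2))) (fun i => facN_deg _) m
    omega
  rw [← coeff_sum_eq n _ dD, ← coeff_sum_eq n _ dN]
  have h1 := hP (D * q) (by omega)
  have h2 := hP (N * q) (by omega)
  have h3 : ∑ l ∈ Finset.range (2 * n), ‖aeval (z l) (D * q)‖ ^ 2 ≤
      9 / 25 * ∑ l ∈ Finset.range (2 * n), ‖aeval (z l) (N * q)‖ ^ 2 := by
    rw [Finset.mul_sum]
    apply Finset.sum_le_sum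
    intro l _
    have := norm_facs_prod_le n m hn hm (z l) (hz1 l) (hz l)
    rw [map_mul, map_mul, norm_mul, norm_mul]
    calc _ ≤ (3 / 5 * ‖aeval (z l) N‖ * ‖aeval (z l) q‖) ^ 2 := by gcongr
      _ = _ := by ring
  rw [h1, h2] at h3
  have : (0 : ℝ) < (2 * n : ℕ) := by exact_mod_cast (by omega : 0 < 2 * n)
  rw [mul_left_comm] at h3
  exact le_of_mul_le_mul_left h3 this

lemma facN_ne_zero (a : ℝ) (ha : 0 < a) : facN a ≠ 0 := by
  intro h
  have := congrArg (eval 1) h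
  simp [facN] at this
  exact ha.ne' this

lemma eig_decay {n m : ℕ} (hn : 0 < n) (hm : 4 * n ^ 2 < 2 ^ m)
    (H U : Matrix (Fin n) (Fin n) ℝ) (hH : H.PosDef) (hHk : IsHankel H)
    (l : Fin n → ℝ) (hl : Antitone l)
    (hl0 : ∀ i, 0 ≤ l i) (hU' : U * U.transpose = 1)
    (hHe : H = U * Matrix.diagonal l * U.transpose) (i j : Fin n) (hij : (i : ℕ) + 2 * m ≤ j) :
    l j ≤ 9 / 25 * l i := by
  obtain ⟨h, hh⟩ := hankel_seq H hHk
  have hp : ∀ q : ℝ[X], q.natDegree < n → 0 ≤ momL h (q ^ 2) := by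
    intro q hq
    rw [momL_sq H h hh q hq]
    simpa using hH.posSemidef.dotProduct_mulVec_nonneg (cvec n q)
  let a : ℕ → ℝ := fun i => 4 ^ i / (4 * n ^ 2)
  have ha : ∀ i, 0 < a i := fun i => by positivity
  set D := ∏ i ∈ Finset.range m, facD (a i) with hD
  set N := ∏ i ∈ Finset.range m, facN (a i) with hN
  have dD : D.natDegree ≤ 2 * m := prod_deg _ (fun i => facD_deg _) m
  have dN : N.natDegree ≤ 2 * m := prod_deg _ (fun i => facN_deg _) m
  have hN0 : N ≠ 0 := Finset.prod_ne_zero_iff.2 fun i _ => facN_ne_zero _ (ha i)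
  have hj := j.2
  let V : ℝ[X] →ₗ[ℝ] (Fin n → ℝ) := U.transpose.mulVecLin.comp (cvec n)
  let Φ : degreeLT ℝ (n - 2 * m) →ₗ[ℝ] (Fin i → ℝ) × (Fin (n - 1 - j) → ℝ) :=
    (((LinearMap.funLeft ℝ ℝ (fun b : Fin i => (⟨b, by omega⟩ : Fin n))).comp
        (V.comp (LinearMap.mulLeft ℝ D))).prod
      ((LinearMap.funLeft ℝ ℝ (fun b : Fin (n - 1 - j) => (⟨j + 1 + b, by omega⟩ : Fin n))).comp
        (V.comp (LinearMap.mulLeft ℝ N)))).comp (degreeLT ℝ (n - 2 * m)).subtype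
  have hfin : Module.finrank ℝ (degreeLT ℝ (n - 2 * m)) = n - 2 * m := by
    rw [(degreeLTEquiv ℝ (n - 2 * m)).finrank_eq]; simp
  haveI : Module.Finite ℝ (degreeLT ℝ (n - 2 * m)) :=
    Module.Finite.equiv (degreeLTEquiv ℝ (n - 2 * m)).symm
  have hker : LinearMap.ker Φ ≠ ⊥ := by
    apply LinearMap.ker_ne_bot_of_finrank_lt
    simp only [Module.finrank_prod, Module.finrank_fin_fun, hfin]
    omega
  obtain ⟨⟨q, hqd⟩, hx, hx0⟩ := Submodule.exists_mem_ne_zero_of_ne_bot hker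
  have hq0 : q ≠ 0 := fun h => hx0 (Subtype.ext h)
  have hx' : Φ ⟨q, hqd⟩ = 0 := hx
  have hqd' : q.natDegree + 2 * m < n := by
    rw [mem_degreeLT, degree_eq_natDegree hq0] at hqd
    have : q.natDegree < n - 2 * m := by exact_mod_cast hqd
    omega
  have h1 : ∀ b : Fin n, b < i → U.transpose.mulVec (cvec n (D * q)) b = 0 := by
    intro b hb
    exact congrFun (congrArg Prod.fst hx') ⟨b, hb⟩
  have h2 : ∀ b : Fin n, j < b → U.transpose.mulVec (cvec n (N * q)) b = 0 := by
    intro b hb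
    have hb' : (j : ℕ) < b := hb
    have h3 : U.transpose.mulVec (cvec n (N * q)) (⟨j + 1 + (b - (j + 1)), by omega⟩ : Fin n) = 0 :=
      congrFun (congrArg Prod.snd hx') ⟨b - (j + 1), by omega⟩
    have e : (⟨j + 1 + (b - (j + 1)), by omega⟩ : Fin n) = b := by ext; simp; omega
    rwa [e] at h3
  have dDq : (D * q).natDegree < n := by
    have := natDegree_mul_le (p := D) (q := q)
    omega
  have dNq : (N * q).natDegree < n := by
    have := natDegree_mul_le (p := N) (q := q)
    omega
  have k1 := momL_prod n h hp a (fun i => (ha i).le) m q hqd'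
  rw [← hD, ← hN, momL_sq H h hh _ dDq, momL_sq H h hh _ dNq, quad_form U H l hHe,
    quad_form U H l hHe] at k1
  have k2 := coeff_norm_le n m hn hm q hqd'
  have k2' : ∑ i, (cvec n (D * q) i) ^ 2 ≤ 9 / 25 * ∑ i, (cvec n (N * q) i) ^ 2 := k2
  have k3 : l j * ∑ b, (cvec n (N * q) b) ^ 2 ≤
      ∑ b, l b * (U.transpose.mulVec (cvec n (N * q)) b) ^ 2 := by
    rw [quad_form_one U hU', Finset.mul_sum]
    apply Finset.sum_le_sum
    intro b _
    rcases lt_or_ge j b with hb | hb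
    · rw [h2 b hb]; simp
    · exact mul_le_mul_of_nonneg_right (hl hb) (sq_nonneg _)
  have k4 : ∑ b, l b * (U.transpose.mulVec (cvec n (D * q)) b) ^ 2 ≤
      l i * ∑ b, (cvec n (D * q) b) ^ 2 := by
    rw [quad_form_one U hU', Finset.mul_sum]
    apply Finset.sum_le_sum
    intro b _
    rcases lt_or_ge b i with hb | hb
    · rw [h1 b hb]; simp
    · exact mul_le_mul_of_nonneg_right (hl hb) (sq_nonneg _)
  have hpos : 0 < ∑ b, (cvec n (N * q) b) ^ 2 := by
    have hne : N * q ≠ 0 := mul_ne_zero hN0 hq0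
    refine Finset.sum_pos' (fun i _ => sq_nonneg _) ⟨⟨(N * q).natDegree, dNq⟩, Finset.mem_univ _, ?_⟩
    have : (N * q).leadingCoeff ≠ 0 := leadingCoeff_ne_zero.2 hne
    have e : cvec n (N * q) ⟨(N * q).natDegree, dNq⟩ = (N * q).leadingCoeff := rfl
    rw [e]
    positivity
  refine le_of_mul_le_mul_right ?_ hpos
  calc _ ≤ _ := k3
    _ ≤ _ := k1
    _ ≤ _ := k4
    _ ≤ l i * (9 / 25 * ∑ i, (cvec n (N * q) i) ^ 2) := mul_le_mul_of_nonneg_left k2' (hl0 i)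
    _ = _ := by ring

lemma tail_sum {n s : ℕ} (hs : 0 < s) (l : Fin n → ℝ) (hl : Antitone l) (hl0 : ∀ i, 0 ≤ l i)
    (hd : ∀ i j : Fin n, (i : ℕ) + s ≤ j → l j ≤ 9 / 25 * l i) (k : Fin n) :
    ∑ i, (if i < k then 0 else l i) ^ 2 ≤ 2 * s * l k ^ 2 := by
  let f : ℕ → ℝ := fun i => if h : i < n then l ⟨i, h⟩ else 0
  have hf0 : ∀ i, 0 ≤ f i := by
    intro i; simp only [f]; split_ifs
    · exact hl0 _
    · exact le_rfl
  have hf : Antitone f := by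
    intro i j hij
    by_cases hj : j < n
    · have hi : i < n := by omega
      simp only [f, hi, hj, dif_pos]
      exact hl hij
    · have : f j = 0 := by simp [f, hj]
      rw [this]; exact hf0 i
  have hfd : ∀ i, f (i + s) ≤ 9 / 25 * f i := by
    intro i
    by_cases hj : i + s < n
    · have hi : i < n := by omega
      simp only [f, hi, hj, dif_pos]
      exact hd _ _ le_rfl
    · have : f (i + s) = 0 := by simp [f, hj]
      rw [this]; have := hf0 i; positivity
  have key := geo_sum_bound s f hf hf0 hfd n k
  have e : ∑ i, (if i < k then 0 else l i) ^ 2 =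
      ∑ i ∈ Finset.range n, (if i < (k : ℕ) then 0 else f i) ^ 2 := by
    rw [← Fin.sum_univ_eq_sum_range (fun i => (if i < (k : ℕ) then 0 else f i) ^ 2)]
    refine Finset.sum_congr rfl fun i _ => ?_
    simp [f]
  have hfk : f k = l k := by simp [f]
  rw [e, ← hfk]
  refine le_trans ?_ key
  have hk := k.2
  have e2 : n = k + (n - k) := by omega
  have e3 : Finset.range n = Finset.range (k + (n - k)) := congrArg _ e2
  rw [e3, Finset.sum_range_add, Finset.sum_eq_zero, zero_add]
  · have : ∀ x, ¬ ((k : ℕ) + x < k) := by intro x; omega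
    simp only [this, if_false]
    apply Finset.sum_le_sum_of_subset_of_nonneg
    · apply Finset.range_subset_range.2
      nlinarith [Nat.sub_le n k]
    · intros; positivity
  · intro i hi
    simp [Finset.mem_range.1 hi]

lemma log_bound (n : ℕ) (hn : 2 ≤ n) :
    ∃ m : ℕ, 0 < m ∧ 4 * n ^ 2 < 2 ^ m ∧ (4 * m : ℝ) ≤ 36 * Real.log n := by
  refine ⟨2 * (Nat.log 2 n + 1) + 2, by omega, ?_, ?_⟩
  · have := Nat.lt_pow_succ_log_self (b := 2) (by norm_num) n
    rw [pow_add, pow_mul']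
    have h2 : n ^ 2 < (2 ^ (Nat.log 2 n + 1)) ^ 2 := Nat.pow_lt_pow_left this (by norm_num)
    simp only [Nat.succ_eq_add_one] at *
    omega
  · have h1 : 1 ≤ Nat.log 2 n := Nat.log_pos (by norm_num) hn
    have h2 : 2 ^ Nat.log 2 n ≤ n := Nat.pow_log_le_self 2 (by omega)
    have h3 : (2 : ℝ) ^ Nat.log 2 n ≤ n := by exact_mod_cast h2
    have h4 := Real.log_le_log (by positivity) h3
    rw [Real.log_pow] at h4
    have h5 := Real.log_two_gt_d9
    have h6 : (1 : ℝ) ≤ Nat.log 2 n := by exact_mod_cast h1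
    push_cast
    nlinarith

lemma main_part (n : ℕ) (hn : 2 ≤ n) (H : Matrix (Fin n) (Fin n) ℝ) (hH : H.PosDef)
    (hHk : IsHankel H) (k : ℕ) (hk : k ≤ n) (B : Matrix (Fin n) (Fin n) ℝ) (hB : B.rank ≤ k) :
    ∃ B' : Matrix (Fin n) (Fin n) ℝ, B'.rank ≤ k ∧
      froNorm (H - B') ≤ 6 * Real.sqrt (Real.log n) * specNorm (H - B) := by
  rcases hk.lt_or_eq with hk | hk
  · obtain ⟨U, l, hl, hl0, hU, hU', hHe⟩ := spectral_sorted H hH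
    obtain ⟨m, hm0, hm, hlog⟩ := log_bound n hn
    let k' : Fin n := ⟨k, hk⟩
    refine ⟨U * Matrix.diagonal (fun i => if i < k' then l i else 0) * U.transpose, ?_, ?_⟩
    · refine (Matrix.rank_mul_le_left _ _).trans ((Matrix.rank_mul_le_right _ _).trans ?_)
      rw [Matrix.rank_diagonal]
      calc _ ≤ Fintype.card {i : Fin n // i < k'} := by
            apply Fintype.card_subtype_mono
            intro i hi
            by_contra h
            exact hi (if_neg h)
        _ = k := by
            rw [Fintype.card_subtype,
              show (Finset.univ.filter fun x : Fin n => x < k') = Finset.Iio k' by ext; simp,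
              Fin.card_Iio]
    · have e : H - U * Matrix.diagonal (fun i => if i < k' then l i else 0) * U.transpose =
          U * Matrix.diagonal (fun i => if i < k' then 0 else l i) * U.transpose := by
        conv_lhs => rw [hHe]
        rw [← Matrix.sub_mul, ← Matrix.mul_sub, Matrix.diagonal_sub]
        congr 3
        ext i
        split_ifs <;> simp
      rw [e, fro_conj U _ hU]
      have h1 := eckart H U B l hl hl0 hU hU' hHe k' hB
      have h2 := tail_sum (s := 2 * m) (by omega) l hl hl0
        (fun i j hij => eig_decay (by omega) hm H U hH hHk l hl hl0 hU' hHe i j hij) k'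
      have hlog0 : 0 ≤ Real.log n := Real.log_natCast_nonneg n
      refine le_trans ?_ (mul_le_mul_of_nonneg_left h1 (by positivity))
      apply Real.sqrt_le_iff.2
      refine ⟨mul_nonneg (by positivity) (hl0 _), ?_⟩
      rw [mul_pow, mul_pow, Real.sq_sqrt hlog0]
      refine h2.trans ?_
      apply mul_le_mul_of_nonneg_right _ (sq_nonneg _)
      push_cast
      linarith
  · refine ⟨H, ?_, ?_⟩
    · simpa [hk] using Matrix.rank_le_card_width H
    · have : froNorm (H - H) = 0 := by simp [froNorm]
      rw [this]
      exact mul_nonneg (by positivity) (specNorm_nonneg _)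

/-- (Lemma: implication 2 of Corollary 5.5 of Beckermann–Townsend.)
For a positive definite Hankel matrix `H` and any `0 ≤ k ≤ n`, the best rank-`k`
approximation satisfies `‖H − H_k‖_F ≤ C √(ln n) ‖H − H_k‖₂`.  Since the truncated
eigendecomposition `H_k` simultaneously minimizes the spectral and the Frobenius error over
all matrices of rank at most `k` (Eckart–Young), this is expressed equivalently as:
for every `B` of rank at most `k` there is `B'` of rank at most `k` with
`‖H − B'‖_F ≤ C √(ln n) ‖H − B‖₂`.  In particular (`k = 0`), `‖H‖_F ≤ C √(ln n) ‖H‖₂`. -/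
theorem posdef_hankel_frobenius_vs_spectral :
    ∃ C : ℝ, 0 < C ∧
      ∀ (n : ℕ), 2 ≤ n →
        ∀ H : Matrix (Fin n) (Fin n) ℝ, H.PosDef → IsHankel H →
          (∀ k : ℕ, k ≤ n →
            ∀ B : Matrix (Fin n) (Fin n) ℝ, B.rank ≤ k →
              ∃ B' : Matrix (Fin n) (Fin n) ℝ, B'.rank ≤ k ∧
                froNorm (H - B') ≤ C * Real.sqrt (Real.log n) * specNorm (H - B)) ∧
          froNorm H ≤ C * Real.sqrt (Real.log n) * specNorm H := by
  refine ⟨6, by norm_num, fun n hn H hH hHk =>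
    ⟨fun k hk B hB => main_part n hn H hH hHk k hk B hB, ?_⟩⟩
  obtain ⟨B', hB', h⟩ := main_part n hn H hH hHk 0 (Nat.zero_le _) 0 (by simp)
  have hB0 : B' = 0 := by
    have h0 : B'.rank = 0 := Nat.le_zero.1 hB'
    have h1 : LinearMap.range B'.mulVecLin = ⊥ := Submodule.finrank_eq_zero.1 h0
    have h2 : B'.mulVecLin = 0 := LinearMap.range_eq_bot.1 h1
    ext i j
    have h3 := congrFun (LinearMap.congr_fun h2 (Pi.single j 1)) i
    simpa using h3
  simpa [hB0] using h
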